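/- Let w be a smooth solution of P_XXXIV[α] on an open interval I ⊆ ℝ, and let ψ_0 be a nowhere-vanishing smooth function on I satisfying both (L1) and (L2) with this w and parameter α. Define the sequences ψ_n, φ_n and the Hankel determinants τ_N from w and ψ_0. Then for every integer N, the bilinear equation D_z² τ_{N+1}·τ_N + (w − 2z)·τ_{N+1}·τ_N = 0 holds identically on I. -/

import Mathlib

/-- The Hankel determinant `τ_N` built from the sequences `ψ` (for `N > 0`) and
`φ` (for `N < 0`); `τ_0 = 1` (determinant of the empty matrix). -/
noncomputable def hankelTau (ψ φ : ℕ → ℝ → ℝ) (N : ℤ) : ℝ → ℝ :=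
  fun z =>
    if 0 ≤ N then
      Matrix.det (Matrix.of fun i j : Fin N.toNat => ψ ((i : ℕ) + (j : ℕ)) z)
    else
      Matrix.det (Matrix.of fun i j : Fin (-N).toNat => φ ((i : ℕ) + (j : ℕ)) z)

namespace P34
open Matrix Finset

/-- Derivative of the determinant at `M` in the direction `X`. -/
noncomputable def dd {n : ℕ} (M X : Matrix (Fin n) (Fin n) ℝ) : ℝ :=
  ∑ i, (M.updateRow i (X i)).det

lemma dd_eq_trace {n : ℕ} (M X : Matrix (Fin n) (Fin n) ℝ) :
    dd M X = Matrix.trace (X * M.adjugate) := by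
  unfold dd Matrix.trace
  refine Finset.sum_congr rfl fun i _ => ?_
  rw [← cramer_transpose_apply, cramer_eq_adjugate_mulVec, ← adjugate_transpose]
  simp [Matrix.mulVec, Matrix.mul_apply, dotProduct, mul_comm]

lemma dd_add {n : ℕ} (M X Y : Matrix (Fin n) (Fin n) ℝ) : dd M (X + Y) = dd M X + dd M Y := by
  simp [dd_eq_trace, Matrix.add_mul]

lemma dd_smul {n : ℕ} (M X : Matrix (Fin n) (Fin n) ℝ) (c : ℝ) : dd M (c • X) = c * dd M X := by
  simp [dd_eq_trace]

lemma dd_self_mul {n : ℕ} (M T : Matrix (Fin n) (Fin n) ℝ) :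
    dd M (M * T) = Matrix.trace T * M.det := by
  rw [dd_eq_trace, Matrix.trace_mul_comm, ← Matrix.mul_assoc, adjugate_mul]
  simp [mul_comm]

lemma dd_self {n : ℕ} (M : Matrix (Fin n) (Fin n) ℝ) : dd M M = n * M.det := by
  simp [dd]

lemma det_updateRow_lin {n : ℕ} (M : Matrix (Fin n) (Fin n) ℝ) (i : Fin n) {β : Type*}
    (s : Finset β) (c : β → ℝ) (g : β → Fin n → ℝ) :
    (M.updateRow i (fun j => ∑ k ∈ s, c k * g k j)).det
      = ∑ k ∈ s, c k * (M.updateRow i (g k)).det := by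
  have : (fun j => ∑ k ∈ s, c k * g k j) = ∑ k ∈ s, c k • g k := by
    ext j; simp
  simp only [this, ← cramer_transpose_apply, map_sum, map_smul]
  simp

lemma hasDerivAt_det {n : ℕ} (M : ℝ → Matrix (Fin n) (Fin n) ℝ) (M' : Matrix (Fin n) (Fin n) ℝ)
    (z : ℝ) (h : ∀ i j, HasDerivAt (fun y => M y i j) (M' i j) z) :
    HasDerivAt (fun y => (M y).det) (dd (M z) M') z := by
  have e : ∀ A : Matrix (Fin n) (Fin n) ℝ,
      A.det = ∑ σ : Equiv.Perm (Fin n), (Equiv.Perm.sign σ : ℝ) * ∏ i, A i (σ i) := by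
    intro A
    rw [← det_transpose, det_apply']
    simp
  simp only [e, dd]
  rw [Finset.sum_comm]
  refine HasDerivAt.fun_sum fun σ _ => ?_
  rw [← Finset.mul_sum]
  refine HasDerivAt.const_mul _ ?_
  have := HasDerivAt.fun_finsetProd (u := Finset.univ) (x := z)
    (f := fun i y => M y i (σ i)) (f' := fun i => M' i (σ i)) (fun i _ => h i (σ i))
  convert this using 1
  refine Finset.sum_congr rfl fun i _ => ?_
  rw [← Finset.prod_erase_mul _ _ (Finset.mem_univ i)]
  simp only [updateRow_self, smul_eq_mul]
  congr 1
  refine Finset.prod_congr rfl fun j hj => ?_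
  rw [updateRow_ne (Finset.ne_of_mem_erase hj)]

lemma det_swap_rows {n : ℕ} (M N : Matrix (Fin n) (Fin n) ℝ) (p q : Fin n) (hpq : p ≠ q)
    (h1 : ∀ j, M p j = N q j) (h2 : ∀ j, M q j = N p j)
    (h3 : ∀ i, i ≠ p → i ≠ q → ∀ j, M i j = N i j) : M.det = - N.det := by
  have : M = N.submatrix (Equiv.swap p q) id := by
    ext i j
    by_cases hp : i = p
    · subst hp; simp [h1]
    · by_cases hq : i = q
      · subst hq; simp [h2]
      · simp [Equiv.swap_apply_of_ne_of_ne hp hq, h3 i hp hq]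
  rw [this, det_permute, Equiv.Perm.sign_swap hpq]
  simp

lemma plucker {n : ℕ} (M : Matrix (Fin n) (Fin n) ℝ) (p q : Fin n) (hpq : p ≠ q)
    (c d : Fin n → ℝ) :
    M.det * ((M.updateRow p c).updateRow q d).det =
      (M.updateRow p c).det * (M.updateRow q d).det
        - (M.updateRow q c).det * (M.updateRow p d).det := by
  have h1 : M.det • c = fun j => ∑ i ∈ Finset.univ, (M.updateRow i c).det * (M.row i) j := by
    have := mulVec_cramer Mᵀ c
    rw [det_transpose] at this
    rw [← this]
    ext j
    simp [Matrix.mulVec, dotProduct, cramer_transpose_apply, mul_comm]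
  have h2 : M.det * ((M.updateRow p c).updateRow q d).det
      = ((M.updateRow q d).updateRow p (M.det • c)).det := by
    rw [det_updateRow_smul, updateRow_comm _ hpq]
  rw [h2, h1, det_updateRow_lin _ _ _ _ M.row, Finset.sum_eq_add p q hpq]
  · have e1 : ((M.updateRow q d).updateRow p (M.row p)).det = (M.updateRow q d).det := by
      congr 1
      ext i j
      by_cases hp : i = p
      · subst hp; rw [updateRow_self, updateRow_ne hpq, Matrix.row_apply]
      · rw [updateRow_ne hp]
    have e2 : ((M.updateRow q d).updateRow p (M.row q)).det = - (M.updateRow p d).det := by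
      apply det_swap_rows _ _ p q hpq
      · intro j; rw [updateRow_self, updateRow_ne hpq.symm, Matrix.row_apply]
      · intro j; rw [updateRow_ne hpq.symm, updateRow_self, updateRow_self]
      · intro i hp hq j
        rw [updateRow_ne hp, updateRow_ne hp, updateRow_ne hq]
    rw [e1, e2]; ring
  · rintro i - ⟨hip, hiq⟩
    rw [det_zero_of_row_eq (M := (M.updateRow q d).updateRow p (M.row i)) (i := p) (j := i),
      mul_zero]
    · exact Ne.symm hip
    · rw [updateRow_self, updateRow_ne hip, updateRow_ne hiq]
      rfl
  · simp
  · simp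

/-- The matrix with rows `(a (f i + j))_j`. -/
def F (a : ℕ → ℝ) {n : ℕ} (f : Fin n → ℕ) : Matrix (Fin n) (Fin n) ℝ :=
  Matrix.of fun i j => a (f i + j)

/-- Convolution. -/
def Cv (a : ℕ → ℝ) (n : ℕ) : ℝ := ∑ k ∈ Finset.range n, a k * a (n - 1 - k)

lemma F_update (a : ℕ → ℝ) {n : ℕ} (f : Fin n → ℕ) (i : Fin n) (k : ℕ) :
    (F a f).updateRow i (fun j => a (k + j)) = F a (Function.update f i k) := by
  ext i' j
  by_cases h : i' = i
  · subst h; simp [F]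
  · simp [F, h]

lemma F_eq_zero (a : ℕ → ℝ) {n : ℕ} (f : Fin n → ℕ) (p q : Fin n) (hpq : p ≠ q)
    (h : f p = f q) : (F a f).det = 0 := by
  apply det_zero_of_row_eq hpq
  ext j; simp [F, h]

lemma F_update_zero (a : ℕ → ℝ) {n : ℕ} (f : Fin n → ℕ) (p q : Fin n) (hpq : p ≠ q) (k : ℕ)
    (h : f q = k) : (F a (Function.update f p k)).det = 0 := by
  apply F_eq_zero a _ p q hpq
  simp [hpq.symm, h]

lemma Cv_split (a : ℕ → ℝ) (p j : ℕ) :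
    Cv a (p + j) = (∑ l ∈ Finset.range j, a (p + l) * a (j - 1 - l))
      + ∑ k ∈ Finset.range p, a (p - 1 - k) * a (k + j) := by
  unfold Cv
  rw [Finset.sum_range_add, add_comm]
  congr 1
  · refine Finset.sum_congr rfl fun l hl => ?_
    congr 2; omega
  · rw [← Finset.sum_range_reflect]
    refine Finset.sum_congr rfl fun l hl => ?_
    rw [Finset.mem_range] at hl
    congr 2; omega

/-- Strictly upper triangular Toeplitz matrix. -/
def T (a : ℕ → ℝ) (n : ℕ) : Matrix (Fin n) (Fin n) ℝ :=
  Matrix.of fun l j => if (l : ℕ) < j then a (j - 1 - l) else 0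

lemma F_mul_T (a : ℕ → ℝ) {n : ℕ} (f : Fin n → ℕ) (i j : Fin n) :
    (F a f * T a n) i j = ∑ l ∈ Finset.range j, a (f i + l) * a (j - 1 - l) := by
  rw [Matrix.mul_apply]
  simp only [F, T, Matrix.of_apply]
  rw [Fin.sum_univ_eq_sum_range (fun l => a (f i + l) * if l < (j:ℕ) then a (j - 1 - l) else 0) n]
  simp only [mul_ite, mul_zero]
  rw [← Finset.sum_filter]
  refine Finset.sum_congr ?_ fun _ _ => rfl
  ext l; simp; omega

lemma dd_Cv (a : ℕ → ℝ) {n : ℕ} (f : Fin n → ℕ) :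
    dd (F a f) (Matrix.of fun i j => Cv a (f i + j))
      = ∑ i, ∑ k ∈ Finset.range (f i), a (f i - 1 - k) * (F a (Function.update f i k)).det := by
  have : (Matrix.of fun i j : Fin n => Cv a (f i + j)) = F a f * T a n
      + Matrix.of fun i j : Fin n => ∑ k ∈ Finset.range (f i), a (f i - 1 - k) * a (k + j) := by
    ext i j
    rw [Matrix.add_apply, F_mul_T]
    simp [Cv_split]
  rw [this, dd_add, dd_self_mul]
  have ht : Matrix.trace (T a n) = 0 := by simp [Matrix.trace, T]
  rw [ht, zero_mul, zero_add, dd]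
  refine Finset.sum_congr rfl fun i _ => ?_
  rw [show (Matrix.of fun i j : Fin n => ∑ k ∈ Finset.range (f i), a (f i - 1 - k) * a (k + j)) i
    = fun j : Fin n => ∑ k ∈ Finset.range (f i), a (f i - 1 - k) * a (k + j) from rfl,
    det_updateRow_lin _ _ _ _ (fun k (j : Fin n) => a (k + j))]
  simp only [F_update]

lemma dd_shift (a : ℕ → ℝ) {n : ℕ} (f : Fin n → ℕ) (s : ℕ) :
    dd (F a f) (Matrix.of fun i j => a (f i + j + s))
      = ∑ i, (F a (Function.update f i (f i + s))).det := by
  unfold dd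
  refine Finset.sum_congr rfl fun i _ => ?_
  rw [← F_update]
  congr 2
  ext j
  simp only [Matrix.of_apply]
  congr 1; omega

/-- Row selection `0, …, n-1, n+s`. -/
def fl (n s : ℕ) : Fin (n + 1) → ℕ := Function.update (fun i => (i : ℕ)) (Fin.last n) (n + s)

lemma fl_zero (n : ℕ) : fl n 0 = fun i : Fin (n + 1) => (i : ℕ) := by
  unfold fl
  ext i
  by_cases h : i = Fin.last n
  · subst h; simp
  · simp [h]

lemma dd_Cv_zero (a : ℕ → ℝ) (n : ℕ) :
    ∑ i, ∑ k ∈ Finset.range (fl n 0 i), a (fl n 0 i - 1 - k) *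
      (F a (Function.update (fl n 0) i k)).det = 0 := by
  refine Finset.sum_eq_zero fun i _ => Finset.sum_eq_zero fun k hk => ?_
  rw [fl_zero, Finset.mem_range] at hk
  change k < (i : ℕ) at hk
  rw [F_update_zero a _ i ⟨k, by omega⟩, mul_zero]
  · intro h; rw [h] at hk; simp at hk
  · rw [fl_zero]

lemma dd_one (a a' : ℕ → ℝ) (u : ℝ) (n : ℕ) (h : ∀ n, a' n = a (n + 1) - u * Cv a n) :
    dd (F a (fl n 0)) (Matrix.of fun i j => a' (fl n 0 i + j)) = (F a (fl n 1)).det := by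
  have e : (Matrix.of fun i j : Fin (n + 1) => a' (fl n 0 i + j))
      = (Matrix.of fun i j : Fin (n + 1) => a (fl n 0 i + j + 1))
        + (-u) • (Matrix.of fun i j : Fin (n + 1) => Cv a (fl n 0 i + j)) := by
    ext i j; simp [h]; ring
  rw [e, dd_add, dd_smul, dd_Cv, dd_shift]
  rw [dd_Cv_zero, mul_zero, add_zero, Finset.sum_eq_single (Fin.last n)]
  · congr 2
    rw [fl_zero]; simp [fl]
  · intro i _ hi
    have hi' : (i : ℕ) < n := Fin.val_lt_last hi
    apply F_update_zero a _ i ⟨i + 1, by omega⟩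
    · intro h; have := congrArg Fin.val h; simp at this
    · rw [fl_zero]
  · simp

lemma fl_of_lt (n s : ℕ) (i : Fin (n + 1)) (h : (i : ℕ) < n) : fl n s i = i := by
  have : i ≠ Fin.last n := by
    rintro rfl; simp at h
  simp [fl, this]

lemma fl_last (n s : ℕ) : fl n s (Fin.last n) = n + s := by simp [fl]

lemma fl_update_last (n s t : ℕ) : Function.update (fl n s) (Fin.last n) (n + t) = fl n t := by
  simp [fl]

lemma dd_two (a a' : ℕ → ℝ) (u : ℝ) (n : ℕ) (h : ∀ n, a' n = a (n + 1) - u * Cv a n) :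
    dd (F a (fl n 1)) (Matrix.of fun i j => a' (fl n 1 i + j)) =
      (∑ i : Fin (n + 1), (F a (Function.update (fl n 1) i (fl n 1 i + 1))).det)
        - u * a 0 * (F a (fl n 0)).det := by
  have e : (Matrix.of fun i j : Fin (n + 1) => a' (fl n 1 i + j))
      = (Matrix.of fun i j : Fin (n + 1) => a (fl n 1 i + j + 1))
        + (-u) • (Matrix.of fun i j : Fin (n + 1) => Cv a (fl n 1 i + j)) := by
    ext i j; simp [h]; ring
  rw [e, dd_add, dd_smul, dd_Cv, dd_shift]
  have h0 : ∑ i, ∑ k ∈ Finset.range (fl n 1 i), a (fl n 1 i - 1 - k) *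
      (F a (Function.update (fl n 1) i k)).det = a 0 * (F a (fl n 0)).det := by
    rw [Finset.sum_eq_single (Fin.last n)]
    · rw [fl_last, Finset.sum_range_succ, Finset.sum_eq_zero, zero_add]
      · have := fl_update_last n 1 0
        rw [add_zero] at this
        rw [this]; simp
      · intro k hk
        rw [Finset.mem_range] at hk
        rw [F_update_zero a _ (Fin.last n) ⟨k, by omega⟩, mul_zero]
        · intro h; have := congrArg Fin.val h; simp at this; omega
        · rw [fl_of_lt]; exact hk
    · intro i _ hi
      have hi' : (i : ℕ) < n := Fin.val_lt_last hi
      refine Finset.sum_eq_zero fun k hk => ?_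
      rw [fl_of_lt _ _ _ hi', Finset.mem_range] at hk
      rw [F_update_zero a _ i ⟨k, by omega⟩, mul_zero]
      · intro h; rw [h] at hk; simp at hk
      · rw [fl_of_lt]; simp; omega
    · simp
  rw [h0]; ring

/-- the two families of shifted determinants cancel, except for the last rows -/
lemma shift_cancel (a : ℕ → ℝ) (n : ℕ) :
    (∑ i : Fin (n + 1), (F a (Function.update (fl n 1) i (fl n 1 i + 1))).det)
      + (∑ i : Fin (n + 1), (F a (Function.update (fl n 0) i (fl n 0 i + 2))).det)
      = 2 * (F a (fl n 2)).det := by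
  rw [← Finset.sum_add_distrib, Finset.sum_eq_single (Fin.last n)]
  · rw [fl_last, fl_last, add_assoc, fl_update_last, fl_update_last]; ring_nf
  · intro i _ hi
    have hi' : (i : ℕ) < n := Fin.val_lt_last hi
    rw [fl_of_lt _ _ _ hi', fl_of_lt _ _ _ hi']
    by_cases h : (i : ℕ) + 1 < n
    · rw [F_update_zero a _ i ⟨i + 1, by omega⟩, F_update_zero a _ i ⟨i + 2, by omega⟩, add_zero]
      · intro h; have := congrArg Fin.val h; simp at this
      · rw [fl_zero]
      · intro h; have := congrArg Fin.val h; simp at this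
      · rw [fl_of_lt]; simpa using h
    · have hn : (i : ℕ) + 1 = n := by omega
      rw [add_comm]
      apply eq_neg_iff_add_eq_zero.mp
      apply det_swap_rows _ _ i (Fin.last n) hi
      · intro j; simp [F, hi, Ne.symm hi, fl_last]; congr 1; omega
      · intro j; simp [F, hi, Ne.symm hi, fl_last]; congr 1; omega
      · intro k hk hk' j; simp [F, hk, hk', fl]
  · simp

/-- The trace-type evaluation from the second order recurrence. -/
lemma dd_p2 (a : ℕ → ℝ) (u u' c : ℝ) (n : ℕ)
    (h : ∀ n, a (n + 2) = c * a n + 2 * n * a (n - 1) + u * Cv a (n + 1) - u' * Cv a n) :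
    (∑ i : Fin (n + 1), (F a (Function.update (fl n 0) i (fl n 0 i + 2))).det)
      = ((n + 1) * c + (2 * n + 1) * (u * a 0)) * (F a (fl n 0)).det := by
  rw [← dd_shift]
  let J : Matrix (Fin (n + 1)) (Fin (n + 1)) ℝ :=
    Matrix.of fun l j => if (l : ℕ) + 1 = j then ((j : ℕ) : ℝ) else 0
  let T' : Matrix (Fin (n + 1)) (Fin (n + 1)) ℝ :=
    Matrix.of fun l j => if (l : ℕ) < j + 1 then a (j - l) else 0
  let H := F a (fl n 0)
  let Lh : Matrix (Fin (n + 1)) (Fin (n + 1)) ℝ :=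
    Matrix.of fun i j => ∑ k ∈ Finset.range (i : ℕ), a (i - 1 - k) * a (k + 1 + j)
  let K : Matrix (Fin (n + 1)) (Fin (n + 1)) ℝ :=
    Matrix.of fun i j => (i : ℕ) * a (i - 1 + j)
  have hJ : ∀ i j, (H * J) i j = (j : ℕ) * a (i + j - 1) := by
    intro i j
    rw [Matrix.mul_apply]
    simp only [H, J, F, fl_zero, Matrix.of_apply]
    rw [Fin.sum_univ_eq_sum_range
      (fun l => a (i + l) * if l + 1 = (j:ℕ) then ((j : ℕ) : ℝ) else 0) (n + 1)]
    rcases Nat.eq_zero_or_pos (j : ℕ) with hj | hj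
    · simp [hj]
    · rw [Finset.sum_eq_single ((j : ℕ) - 1)]
      · rw [if_pos (by omega), mul_comm]
        congr 2; omega
      · intro b _ hb
        rw [if_neg (by omega), mul_zero]
      · intro hb; exfalso; apply hb; rw [Finset.mem_range]; omega
  have hT : ∀ i j, (H * T') i j = ∑ l ∈ Finset.range ((j : ℕ) + 1), a (i + l) * a (j - l) := by
    intro i j
    rw [Matrix.mul_apply]
    simp only [H, T', F, fl_zero, Matrix.of_apply]
    rw [Fin.sum_univ_eq_sum_range
      (fun l => a (i + l) * if l < (j:ℕ) + 1 then a (j - l) else 0) (n + 1)]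
    simp only [mul_ite, mul_zero]
    rw [← Finset.sum_filter]
    refine Finset.sum_congr ?_ fun _ _ => rfl
    ext l; simp; omega
  have e : (Matrix.of fun i j : Fin (n + 1) => a (fl n 0 i + j + 2))
      = c • H + ((2 : ℝ) • (K + H * J) + (u • (H * T' + Lh)
        + (-u') • (Matrix.of fun i j : Fin (n + 1) => Cv a (fl n 0 i + j)))) := by
    ext i j
    simp only [Matrix.add_apply, Matrix.smul_apply, hJ, hT, smul_eq_mul, Matrix.of_apply, h]
    simp only [H, K, Lh, F, fl_zero, Matrix.of_apply]
    have h1 := Cv_split a i (j + 1)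
    rw [← add_assoc] at h1
    rw [h1]
    have h2 : ∑ k ∈ Finset.range (i : ℕ), a (i - 1 - k) * a (k + (j + 1))
        = ∑ k ∈ Finset.range (i : ℕ), a (i - 1 - k) * a (k + 1 + j) := by
      refine Finset.sum_congr rfl fun k _ => ?_
      congr 2; omega
    rw [h2, Nat.add_sub_cancel]
    have h3 : ((i : ℕ) : ℝ) * a (i - 1 + j) = (i : ℕ) * a (i + j - 1) := by
      rcases Nat.eq_zero_or_pos (i : ℕ) with hi | hi
      · simp [hi]
      · congr 2; omega
    rw [h3]
    push_cast
    ring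
  have hK : dd H K = 0 := by
    unfold dd
    refine Finset.sum_eq_zero fun i _ => ?_
    have : K i = (i : ℝ) • (fun j : Fin (n + 1) => a (i - 1 + j)) := by
      ext j; simp [K]
    rw [this, det_updateRow_smul, F_update]
    rcases Nat.eq_zero_or_pos (i : ℕ) with hi | hi
    · simp [hi]
    · rw [F_update_zero a _ i ⟨i - 1, by omega⟩, mul_zero]
      · intro h; have := congrArg Fin.val h; simp at this; omega
      · rw [fl_zero]
  have hL : dd H Lh = n * (a 0 * H.det) := by
    unfold dd
    have : ∀ i : Fin (n + 1), (H.updateRow i (Lh i)).det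
        = if (i : ℕ) = 0 then 0 else a 0 * H.det := by
      intro i
      have e1 : Lh i = fun j : Fin (n + 1) =>
        ∑ k ∈ Finset.range (i : ℕ), a (i - 1 - k) * a (k + 1 + j) := rfl
      rw [e1, det_updateRow_lin _ _ _ _ (fun k (j : Fin (n + 1)) => a (k + 1 + j))]
      simp only [H, F_update]
      split_ifs with hi
      · simp [hi]
      · rw [Finset.sum_eq_single ((i : ℕ) - 1)]
        · congr 1
          · simp
          · congr 2
            rw [show (i : ℕ) - 1 + 1 = fl n 0 i by rw [fl_zero]; simp only; omega,
              Function.update_eq_self]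
        · intro k hk hk'
          rw [Finset.mem_range] at hk
          rw [F_update_zero a _ i ⟨k + 1, by omega⟩, mul_zero]
          · intro h; have := congrArg Fin.val h; simp at this; omega
          · rw [fl_zero]
        · intro hb; exfalso; apply hb; rw [Finset.mem_range]; omega
    rw [Finset.sum_congr rfl fun i _ => this i, Fin.sum_univ_succ]
    simp
  have hC : dd H (Matrix.of fun i j : Fin (n + 1) => Cv a (fl n 0 i + j)) = 0 := by
    rw [dd_Cv]
    exact dd_Cv_zero a n
  have tJ : Matrix.trace J = 0 := by simp [Matrix.trace, J]
  have tT : Matrix.trace T' = (n + 1) * a 0 := by simp [Matrix.trace, T']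
  rw [e]
  change dd H _ = _ * H.det
  rw [dd_add, dd_add, dd_add, dd_smul, dd_smul, dd_smul, dd_smul, dd_add, dd_add, dd_self,
    dd_self_mul, dd_self_mul, hK, hL, hC, tJ, tT]
  push_cast
  ring

lemma det_last_single {n : ℕ} (M : Matrix (Fin (n + 1)) (Fin (n + 1)) ℝ) :
    (M.updateRow (Fin.last n) (Pi.single (Fin.last n) 1)).det
      = (M.submatrix Fin.castSucc Fin.castSucc).det := by
  rw [det_succ_row _ (Fin.last n), Finset.sum_eq_single (Fin.last n)]
  · simp only [updateRow_self, Pi.single_eq_same, Fin.succAbove_last]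
    rw [Even.neg_one_pow ⟨_, rfl⟩, one_mul, one_mul]
    congr 1
    ext i j
    simp
  · intro j _ hj
    simp [hj]
  · simp

lemma sub_F (a : ℕ → ℝ) (m : ℕ) (f : Fin (m + 2) → ℕ) (g : Fin (m + 1) → ℕ)
    (h : ∀ i, f i.castSucc = g i) :
    ((F a f).updateRow (Fin.last (m + 1)) (Pi.single (Fin.last (m + 1)) 1)).det = (F a g).det := by
  rw [det_last_single]
  congr 1
  ext i j
  simp [F, h]

lemma plucker_F (a : ℕ → ℝ) (m : ℕ) :
    (F a (fl (m + 1) 0)).det * (F a (fl m 2)).det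
      = ((∑ i : Fin (m + 2),
            (F a (Function.update (fl (m + 1) 0) i (fl (m + 1) 0 i + 2))).det)
          - (F a (fl (m + 1) 2)).det) * (F a (fl m 0)).det
        + (F a (fl (m + 1) 1)).det * (F a (fl m 1)).det := by
  let p : Fin (m + 2) := (Fin.last m).castSucc
  have hp : p ≠ Fin.last (m + 1) := by
    intro h; have := congrArg Fin.val h; simp [p] at this
  have hpv : (p : ℕ) = m := by simp [p]
  have key := plucker (F a (fl (m + 1) 0)) p (Fin.last (m + 1)) hp
    (fun j => a (m + 2 + j)) (Pi.single (Fin.last (m + 1)) 1)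
  have e1 : ∑ i : Fin (m + 2), (F a (Function.update (fl (m + 1) 0) i (fl (m + 1) 0 i + 2))).det
      = (F a (Function.update (fl (m + 1) 0) p (m + 2))).det + (F a (fl (m + 1) 2)).det := by
    rw [Finset.sum_eq_add p (Fin.last (m + 1)) hp]
    · rw [fl_last, fl_of_lt _ _ p (by omega), hpv, add_zero, fl_update_last]
    · rintro i - ⟨h1, h2⟩
      have h3 : (i : ℕ) < m + 1 := Fin.val_lt_last h2
      have h4 : (i : ℕ) ≠ m := fun h => h1 (Fin.ext (by rw [h, hpv]))
      rw [fl_of_lt _ _ i h3]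
      apply F_update_zero a _ i ⟨i + 2, by omega⟩
      · intro h; have := congrArg Fin.val h; simp at this
      · rw [fl_zero]
    · simp
    · simp
  have cs : ∀ s t, (i : Fin (m + 1)) → Function.update (fl (m + 1) t) p (m + s) i.castSucc
      = fl m s i := by
    intro s t i
    by_cases h : i = Fin.last m
    · subst h; simp [p, fl_last]
    · have h3 : (i : ℕ) < m := Fin.val_lt_last h
      have : i.castSucc ≠ p := by
        intro h'; have := congrArg Fin.val h'; simp [hpv] at this; omega
      rw [Function.update_of_ne this, fl_of_lt _ _ _ h3, fl_of_lt] <;> simp <;> omega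
  have e2 : (((F a (fl (m + 1) 0)).updateRow p fun j => a (m + 2 + j)).updateRow
      (Fin.last (m + 1)) (Pi.single (Fin.last (m + 1)) 1)).det = (F a (fl m 2)).det := by
    rw [F_update]
    exact sub_F a m _ _ (cs 2 0)
  have e3 : ((F a (fl (m + 1) 0)).updateRow
      (Fin.last (m + 1)) (Pi.single (Fin.last (m + 1)) 1)).det = (F a (fl m 0)).det := by
    apply sub_F a m
    intro i; simp [fl_zero]
  have e4 : ((F a (fl (m + 1) 0)).updateRow p (Pi.single (Fin.last (m + 1)) 1)).det
      = - (F a (fl m 1)).det := by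
    rw [← sub_F a m _ _ (cs 1 0)]
    apply det_swap_rows _ _ p _ hp
    · intro j; simp
    · intro j
      rw [updateRow_ne hp.symm, updateRow_ne hp]
      simp [F, fl_last]
    · intro i h1 h2 j
      rw [updateRow_ne h1, updateRow_ne h2]
      simp [F, h1]
  have e5 : ((F a (fl (m + 1) 0)).updateRow (Fin.last (m + 1)) fun j => a (m + 2 + j)).det
      = (F a (fl (m + 1) 1)).det := by
    rw [F_update]
    congr 2
    exact fl_update_last (m + 1) 0 1
  rw [e2, e3, e4, e5, F_update] at key
  rw [e1]
  linear_combination key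

/-- Iterated convolution. -/
def Tv (a : ℕ → ℝ) (n : ℕ) : ℝ := ∑ k ∈ Finset.range n, a k * Cv a (n - 1 - k)

lemma Tv_succ (a : ℕ → ℝ) (n : ℕ) :
    Tv a (n + 1) = ∑ k ∈ Finset.range n, a k * Cv a (n - k) := by
  simp [Tv, Finset.sum_range_succ, Cv]

lemma Cv_succ (a : ℕ → ℝ) (n : ℕ) :
    Cv a (n + 1) = (∑ k ∈ Finset.range n, a k * a (n - k)) + a n * a 0 := by
  simp [Cv, Finset.sum_range_succ]

lemma sym_sum (a : ℕ → ℝ) (n : ℕ) :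
    ∑ k ∈ Finset.range n, a k * (2 * ((n - 1 - k : ℕ) : ℝ) * a (n - 1 - k - 1))
      = n * Cv a (n - 1) := by
  rcases n with _ | n
  · simp
  rw [Finset.sum_range_succ]
  have h1 : ∑ k ∈ Finset.range n, a k * (2 * ((n + 1 - 1 - k : ℕ) : ℝ) * a (n + 1 - 1 - k - 1))
      = ∑ k ∈ Finset.range n, ((n - k : ℕ) : ℝ) * (a k * a (n - 1 - k))
        + ∑ k ∈ Finset.range n, ((n - k : ℕ) : ℝ) * (a k * a (n - 1 - k)) := by
    rw [← Finset.sum_add_distrib]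
    refine Finset.sum_congr rfl fun k hk => ?_
    rw [show n + 1 - 1 - k - 1 = n - 1 - k by omega, Nat.add_sub_cancel]; ring
  have h2 : ∑ k ∈ Finset.range n, ((n - k : ℕ) : ℝ) * (a k * a (n - 1 - k))
      = ∑ k ∈ Finset.range n, ((k + 1 : ℕ) : ℝ) * (a k * a (n - 1 - k)) := by
    rw [← Finset.sum_range_reflect]
    refine Finset.sum_congr rfl fun k hk => ?_
    rw [Finset.mem_range] at hk
    rw [show n - (n - 1 - k) = k + 1 by omega, show n - 1 - (n - 1 - k) = k by omega]; ring
  rw [h1]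
  nth_rewrite 2 [h2]
  rw [← Finset.sum_add_distrib, Nat.add_sub_cancel, Nat.sub_self]
  simp only [Nat.cast_zero, mul_zero, zero_mul, add_zero]
  rw [Cv, Finset.mul_sum]
  refine Finset.sum_congr rfl fun k hk => ?_
  rw [Finset.mem_range] at hk
  rw [← add_mul, ← Nat.cast_add, show n - k + (k + 1) = n + 1 by omega]

lemma hasDerivAt_Cv (ψ : ℕ → ℝ → ℝ) (z u : ℝ)
    (h : ∀ n, HasDerivAt (ψ n) (ψ (n + 1) z - u * Cv (fun n => ψ n z) n) z) (n : ℕ) :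
    HasDerivAt (fun y => Cv (fun n => ψ n y) n)
      (2 * (Cv (fun n => ψ n z) (n + 1) - ψ n z * ψ 0 z) - 2 * u * Tv (fun n => ψ n z) n) z := by
  unfold Cv
  have := HasDerivAt.fun_sum (u := Finset.range n) (x := z)
    (A := fun k y => ψ k y * ψ (n - 1 - k) y) (fun k _ => (h k).mul (h (n - 1 - k)))
  refine this.congr_deriv ?_
  rw [Finset.sum_add_distrib, ← Finset.sum_range_reflect, ← Finset.sum_add_distrib]
  change _ = 2 * (Cv (fun n => ψ n z) (n + 1) - ψ n z * ψ 0 z) - 2 * u * Tv (fun n => ψ n z) n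
  rw [Cv_succ, Tv, add_sub_cancel_right, Finset.mul_sum, Finset.mul_sum,
    ← Finset.sum_sub_distrib]
  refine Finset.sum_congr rfl fun k hk => ?_
  rw [Finset.mem_range] at hk
  rw [show n - 1 - (n - 1 - k) = k by omega, show n - 1 - k + 1 = n - k by omega]
  ring

lemma rec_two (I : Set ℝ) (hI : IsOpen I) (u u1 : ℝ → ℝ) (ψ : ℕ → ℝ → ℝ)
    (hψ : ∀ z ∈ I, ∀ n, HasDerivAt (ψ n) (ψ (n + 1) z - u z * Cv (fun n => ψ n z) n) z)
    (hu : ∀ z ∈ I, HasDerivAt u (u1 z) z)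
    (hu1 : ∀ z ∈ I, HasDerivAt u1 ((2 * z - 2 * u z * ψ 0 z) * u z) z)
    (h0 : ∀ z ∈ I, ψ 2 z = (2 * z - 2 * u z * ψ 0 z) * ψ 0 z + u z * (ψ 0 z) ^ 2) (n : ℕ) :
    ∀ z ∈ I, ψ (n + 2) z = (2 * z - 2 * u z * ψ 0 z) * ψ n z + 2 * n * ψ (n - 1) z
      + u z * Cv (fun n => ψ n z) (n + 1) - u1 z * Cv (fun n => ψ n z) n := by
  induction n using Nat.strong_induction_on with
  | _ n ih =>
  intro z hz
  rcases n with _ | n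
  · rw [zero_add, h0 z hz]; simp [Cv, sq]
  set a : ℕ → ℝ := fun n => ψ n z with ha
  -- the convolution identity
  have K : Cv a (n + 2) - a n * a 1 - a (n + 1) * a 0
      = (2 * z - 2 * u z * a 0) * Cv a n + n * Cv a (n - 1) + u z * Tv a (n + 1)
        - u1 z * Tv a n := by
    have e1 : ∑ k ∈ Finset.range n, a k * a (n - 1 - k + 2)
        = (2 * z - 2 * u z * a 0) * Cv a n + n * Cv a (n - 1) + u z * Tv a (n + 1)
        - u1 z * Tv a n := by
      rw [← sym_sum, Tv_succ, Tv]
      nth_rewrite 1 [Cv]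
      simp only [Finset.mul_sum]
      rw [← Finset.sum_add_distrib, ← Finset.sum_add_distrib, ← Finset.sum_sub_distrib]
      refine Finset.sum_congr rfl fun k hk => ?_
      rw [Finset.mem_range] at hk
      have := ih (n - 1 - k) (by omega) z hz
      rw [show n - 1 - k + 1 = n - k by omega] at this
      simp only [ha] at this ⊢
      rw [this]
      ring
    rw [← e1, Cv_succ, Finset.sum_range_succ]
    rw [show n + 1 - n = 1 by omega]
    have : ∑ k ∈ Finset.range n, a k * a (n + 1 - k)
        = ∑ k ∈ Finset.range n, a k * a (n - 1 - k + 2) := by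
      refine Finset.sum_congr rfl fun k hk => ?_
      rw [Finset.mem_range] at hk
      rw [show n + 1 - k = n - 1 - k + 2 by omega]
    rw [this]; ring
  have d1 := hψ z hz (n + 2)
  have d0 : HasDerivAt (ψ 0) (a 1) z := by simpa [Cv] using hψ z hz 0
  have dc : HasDerivAt (fun y => 2 * y - 2 * u y * ψ 0 y)
      (2 - 2 * u1 z * a 0 - 2 * u z * a 1) z := by
    refine (((hasDerivAt_id z).const_mul 2).sub (((hu z hz).const_mul 2).mul d0)).congr_deriv ?_
    simp only [ha]; ring
  have d2 := (((dc.mul (hψ z hz n)).add ((hψ z hz (n - 1)).const_mul (2 * (n : ℝ)))).add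
    ((hu z hz).mul (hasDerivAt_Cv ψ z (u z) (hψ z hz) (n + 1)))).sub
    ((hu1 z hz).mul (hasDerivAt_Cv ψ z (u z) (hψ z hz) n))
  have ev : ψ (n + 2) =ᶠ[nhds z] _ :=
    Filter.eventuallyEq_of_mem (hI.mem_nhds hz) (fun y hy => ih n (by omega) y hy)
  have key := d1.unique (d2.congr_of_eventuallyEq ev)
  have hn : (n : ℝ) * ψ (n - 1 + 1) z = n * a n := by
    rcases n with _ | n
    · simp
    · simp [ha]
  simp only [← ha] at key
  change ψ (n + 1 + 2) z = (2 * z - 2 * u z * a 0) * a (n + 1) + 2 * (n + 1 : ℕ) * a n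
      + u z * Cv a (n + 2) - u1 z * Cv a (n + 1)
  simp only [show ∀ m, ψ m z = a m from fun _ => rfl] at key hn ⊢
  rw [show n + 1 + 2 = n + 2 + 1 by omega]
  rw [show n + 1 + 1 = n + 2 by omega] at key
  push_cast
  linear_combination key + 2 * u z * K + 2 * hn

lemma core (I : Set ℝ) (hI : IsOpen I) (u u1 : ℝ → ℝ) (ψ : ℕ → ℝ → ℝ)
    (hψ : ∀ z ∈ I, ∀ n, HasDerivAt (ψ n) (ψ (n + 1) z - u z * Cv (fun n => ψ n z) n) z)
    (hu : ∀ z ∈ I, HasDerivAt u (u1 z) z)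
    (hu1 : ∀ z ∈ I, HasDerivAt u1 ((2 * z - 2 * u z * ψ 0 z) * u z) z)
    (h0 : ∀ z ∈ I, ψ 2 z = (2 * z - 2 * u z * ψ 0 z) * ψ 0 z + u z * (ψ 0 z) ^ 2)
    (N : ℕ) (z : ℝ) (hz : z ∈ I) (τ : ℕ → ℝ → ℝ)
    (hτ : ∀ N, τ N = fun y => (F (fun n => ψ n y) (fun i : Fin N => (i : ℕ))).det) :
    (deriv (deriv (τ (N + 1))) z * τ N z - 2 * deriv (τ (N + 1)) z * deriv (τ N) z
      + τ (N + 1) z * deriv (deriv (τ N)) z)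
      + (2 * u z * ψ 0 z - 2 * z) * (τ (N + 1) z * τ N z) = 0 := by
  have hdF : ∀ n (f : Fin n → ℕ), ∀ y ∈ I,
      HasDerivAt (fun y => (F (fun n => ψ n y) f).det)
        (dd (F (fun n => ψ n y) f) (Matrix.of fun i j =>
          (fun n => ψ (n + 1) y - u y * Cv (fun n => ψ n y) n) (f i + j))) y := by
    intro n f y hy
    apply hasDerivAt_det
    intro i j
    exact hψ y hy _
  have hτ' : ∀ n, τ (n + 1) = fun y => (F (fun n => ψ n y) (fl n 0)).det := by
    intro n; rw [hτ, fl_zero]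
  have D1 : ∀ n, ∀ y ∈ I, deriv (τ (n + 1)) y = (F (fun n => ψ n y) (fl n 1)).det := by
    intro n y hy
    rw [hτ', (hdF _ _ y hy).deriv]
    exact dd_one _ _ (u y) n (fun _ => rfl)
  have D2 : ∀ n, deriv (deriv (τ (n + 1))) z
      = (∑ i : Fin (n + 1), (F (fun n => ψ n z) (Function.update (fl n 1) i (fl n 1 i + 1))).det)
        - u z * ψ 0 z * (F (fun n => ψ n z) (fl n 0)).det := by
    intro n
    have ev : deriv (τ (n + 1)) =ᶠ[nhds z] fun y => (F (fun n => ψ n y) (fl n 1)).det :=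
      Filter.eventuallyEq_of_mem (hI.mem_nhds hz) (fun y hy => D1 n y hy)
    rw [ev.deriv_eq, (hdF _ _ z hz).deriv]
    exact dd_two _ _ (u z) n (fun _ => rfl)
  have hrec := fun n => rec_two I hI u u1 ψ hψ hu hu1 h0 n z hz
  have P2 := fun n => dd_p2 (fun n => ψ n z) (u z) (u1 z) (2 * z - 2 * u z * ψ 0 z) n hrec
  have SC := fun n => shift_cancel (fun n => ψ n z) n
  rcases N with _ | m
  · have t0 : τ 0 = fun _ => 1 := by rw [hτ]; simp
    have hd0 : deriv (τ 0) = fun _ => 0 := by rw [t0]; simp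
    have hdd0 : deriv (deriv (τ 0)) z = 0 := by rw [hd0]; simp
    have t1 : τ (0 + 1) z = ψ 0 z := by rw [hτ]; simp [F]
    have t1' : (F (fun n => ψ n z) (fl 0 0)).det = ψ 0 z := by rw [fl_zero]; simp [F]
    have s2 : (F (fun n => ψ n z) (fl 0 2)).det = ψ 2 z := by simp [F, fl]
    have p2 := P2 0
    have sc := SC 0
    have d2 := D2 0
    rw [hdd0, d2, hd0, t0, t1]
    rw [t1'] at p2 ⊢
    rw [s2] at sc
    have := h0 z hz
    push_cast at p2
    linear_combination sc - p2 + 2 * this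
  · have pl := plucker_F (fun n => ψ n z) m
    rw [D2, D2, D1 _ z hz, D1 _ z hz, hτ', hτ']
    have p1 := P2 m
    have p2 := P2 (m + 1)
    have s1 := SC m
    have s2 := SC (m + 1)
    push_cast at p2
    set A := (F (fun n => ψ n z) (fl (m + 1) 0)).det
    set B := (F (fun n => ψ n z) (fl m 0)).det
    linear_combination 2 * pl + B * s2 + A * s1 + B * p2 - A * p1

lemma seq_props (I : Set ℝ) (hI : IsOpen I) (u : ℝ → ℝ) (ψ : ℕ → ℝ → ℝ)
    (hu : ContDiffOn ℝ (⊤ : ℕ∞) u I) (h0 : ContDiffOn ℝ (⊤ : ℕ∞) (ψ 0) I)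
    (hrec : ∀ n : ℕ, ∀ z ∈ I, ψ (n + 1) z = deriv (ψ n) z + u z * Cv (fun n => ψ n z) n) :
    ∀ z ∈ I, ∀ n, HasDerivAt (ψ n) (ψ (n + 1) z - u z * Cv (fun n => ψ n z) n) z := by
  have sm : ∀ n, ContDiffOn ℝ (⊤ : ℕ∞) (ψ n) I := by
    intro n
    induction n using Nat.strong_induction_on with
    | _ n ih =>
    rcases n with _ | n
    · exact h0
    · refine ContDiffOn.congr (f := fun z => deriv (ψ n) z + u z * Cv (fun n => ψ n z) n) ?_
        (fun z hz => hrec n z hz)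
      refine ((ih n (by omega)).deriv_of_isOpen hI (by simp)).add (hu.mul ?_)
      unfold Cv
      refine ContDiffOn.sum fun k hk => ?_
      rw [Finset.mem_range] at hk
      exact (ih k (by omega)).mul (ih (n - 1 - k) (by omega))
  intro z hz n
  have : DifferentiableAt ℝ (ψ n) z :=
    ((sm n).differentiableOn (by simp)).differentiableAt (hI.mem_nhds hz)
  rw [hrec n z hz, add_sub_cancel_right]
  exact this.hasDerivAt

end P34

/-- The bilinear equation `(D_z² + w - 2z) τ_{N+1}·τ_N = 0`, where
`D_z² g·f = g''f - 2g'f' + gf''`. -/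
theorem painleve34_bilinear_Dsq
    (I : Set ℝ) (hIopen : IsOpen I) (hIconn : I.OrdConnected)
    (α : ℝ) (w ψ0 : ℝ → ℝ)
    (hw_smooth : ContDiffOn ℝ (⊤ : ℕ∞) w I)
    (hw_P34 : ∀ z ∈ I,
      2 * w z * deriv (deriv w) z - (deriv w z) ^ 2 + 4 * (w z) ^ 3
        - 8 * z * (w z) ^ 2 + 16 * α ^ 2 = 0)
    (hψ0_smooth : ContDiffOn ℝ (⊤ : ℕ∞) ψ0 I)
    (hψ0_ne : ∀ z ∈ I, ψ0 z ≠ 0)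
    (hL1 : ∀ z ∈ I, 2 * w z * deriv ψ0 z - deriv w z * ψ0 z - 4 * α * ψ0 z = 0)
    (hL2 : ∀ z ∈ I, deriv (deriv ψ0) z + (w z - 2 * z) * ψ0 z = 0)
    (ψ φ : ℕ → ℝ → ℝ)
    (hψ_zero : ψ 0 = ψ0)
    (hφ_zero : ∀ z ∈ I, φ 0 z = w z / (2 * ψ0 z))
    (hψ_rec : ∀ n : ℕ, ∀ z ∈ I, ψ (n + 1) z =
      deriv (ψ n) z + (w z / (2 * ψ0 z)) *
        ∑ k ∈ Finset.range n, ψ k z * ψ (n - 1 - k) z)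
    (hφ_rec : ∀ n : ℕ, ∀ z ∈ I, φ (n + 1) z =
      deriv (φ n) z + ψ0 z *
        ∑ k ∈ Finset.range n, φ k z * φ (n - 1 - k) z) :
    ∀ N : ℤ, ∀ z ∈ I,
      (deriv (deriv (hankelTau ψ φ (N + 1))) z * hankelTau ψ φ N z
        - 2 * deriv (hankelTau ψ φ (N + 1)) z * deriv (hankelTau ψ φ N) z
        + hankelTau ψ φ (N + 1) z * deriv (deriv (hankelTau ψ φ N)) z)
      + (w z - 2 * z) * (hankelTau ψ φ (N + 1) z * hankelTau ψ φ N z) = 0 := by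
  have smd : ∀ f : ℝ → ℝ, ContDiffOn ℝ (⊤ : ℕ∞) f I → ∀ z ∈ I, HasDerivAt f (deriv f z) z :=
    fun f hf z hz => ((hf.differentiableOn (by simp)).differentiableAt
      (hIopen.mem_nhds hz)).hasDerivAt
  have smder : ∀ f : ℝ → ℝ, ContDiffOn ℝ (⊤ : ℕ∞) f I → ContDiffOn ℝ (⊤ : ℕ∞) (deriv f) I :=
    fun f hf => hf.deriv_of_isOpen hIopen (by simp)
  have evI : ∀ f g : ℝ → ℝ, (∀ z ∈ I, f z = g z) → ∀ z ∈ I, f =ᶠ[nhds z] g :=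
    fun f g h z hz => Filter.eventuallyEq_of_mem (hIopen.mem_nhds hz) h
  obtain ⟨u, hu⟩ : ∃ u : ℝ → ℝ, u = fun z => w z / (2 * ψ0 z) := ⟨_, rfl⟩
  have hus : ContDiffOn ℝ (⊤ : ℕ∞) u I := by
    rw [hu]
    exact hw_smooth.div (contDiffOn_const.mul hψ0_smooth)
      (fun z hz => mul_ne_zero two_ne_zero (hψ0_ne z hz))
  have hw : ∀ z ∈ I, w z = 2 * u z * ψ0 z := by
    intro z hz
    have := hψ0_ne z hz
    simp only [hu]
    field_simp
  have hw1 : ∀ z ∈ I, deriv w z = 2 * deriv u z * ψ0 z + 2 * u z * deriv ψ0 z := by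
    intro z hz
    rw [(evI _ _ hw z hz).deriv_eq]
    exact (((smd u hus z hz).const_mul 2).mul (smd _ hψ0_smooth z hz)).deriv
  have hwr : ∀ z ∈ I, u z * deriv ψ0 z - deriv u z * ψ0 z = 2 * α := by
    intro z hz
    have h1 := hL1 z hz
    rw [hw1 z hz, hw z hz] at h1
    apply mul_left_cancel₀ (hψ0_ne z hz)
    linear_combination h1 / 2
  have hv2 : ∀ z ∈ I, HasDerivAt (deriv ψ0) ((2 * z - 2 * u z * ψ0 z) * ψ0 z) z := by
    intro z hz
    refine (smd _ (smder _ hψ0_smooth) z hz).congr_deriv ?_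
    have := hL2 z hz
    rw [hw z hz] at this
    linear_combination this
  have hu2 : ∀ z ∈ I, HasDerivAt (deriv u) ((2 * z - 2 * u z * ψ0 z) * u z) z := by
    intro z hz
    have d1 := smd _ (smder _ hus) z hz
    refine d1.congr_deriv ?_
    have d2 := ((smd u hus z hz).mul (hv2 z hz)).sub (d1.mul (smd _ hψ0_smooth z hz))
    have d3 := d2.congr_of_eventuallyEq (evI _ _ (fun y hy => (hwr y hy).symm) z hz)
    have := d3.unique (hasDerivAt_const z (2 * α))
    apply mul_left_cancel₀ (hψ0_ne z hz)
    linear_combination -this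
  have hψ' := P34.seq_props I hIopen u ψ hus (by rw [hψ_zero]; exact hψ0_smooth)
    (fun n z hz => by rw [hψ_rec n z hz, hu]; rfl)
  have hφ0 : ∀ z ∈ I, φ 0 z = u z := fun z hz => by rw [hφ_zero z hz, hu]
  have hφ' := P34.seq_props I hIopen ψ0 φ hψ0_smooth (hus.congr hφ0)
    (fun n z hz => by rw [hφ_rec n z hz]; rfl)
  have hψ2 : ∀ z ∈ I, ψ 2 z = (2 * z - 2 * u z * ψ 0 z) * ψ 0 z + u z * (ψ 0 z) ^ 2 := by
    intro z hz
    have e1 : ∀ y ∈ I, ψ 1 y = deriv ψ0 y := fun y hy => by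
      rw [hψ_rec 0 y hy, hψ_zero]; simp
    rw [hψ_rec 1 z hz, (evI _ _ e1 z hz).deriv_eq, (hv2 z hz).deriv, hψ_zero, hu]
    simp [hψ_zero, sq]
  have hφ2 : ∀ z ∈ I, φ 2 z = (2 * z - 2 * ψ0 z * φ 0 z) * φ 0 z + ψ0 z * (φ 0 z) ^ 2 := by
    intro z hz
    have e1 : ∀ y ∈ I, φ 1 y = deriv u y := fun y hy => by
      rw [hφ_rec 0 y hy, (evI _ _ hφ0 y hy).deriv_eq]; simp
    rw [hφ_rec 1 z hz, (evI _ _ e1 z hz).deriv_eq, (hu2 z hz).deriv]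
    rw [Finset.sum_range_one, show (1 - 1 - 0 : ℕ) = 0 from rfl, hφ0 z hz]
    ring
  intro N z hz
  rcases lt_or_ge N 0 with hN | hN
  · obtain ⟨m, rfl⟩ : ∃ m : ℕ, N = -((m : ℤ) + 1) := ⟨(-N - 1).toNat, by omega⟩
    have key := P34.core I hIopen ψ0 (deriv ψ0) φ hφ' (smd _ hψ0_smooth)
      (fun y hy => by
        refine (hv2 y hy).congr_deriv ?_
        rw [hφ0 y hy]; ring) hφ2 m z hz _ (fun _ => rfl)
    have t1 : ∀ k : ℕ, hankelTau ψ φ (-(k : ℤ))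
        = fun y => (P34.F (fun n => φ n y) (fun i : Fin k => (i : ℕ))).det := by
      intro k
      ext y
      unfold hankelTau
      rcases k with _ | k
      · simp
      · rw [if_neg (by omega)]
        have : (- -((k + 1 : ℕ) : ℤ)).toNat = k + 1 := by omega
        rw [this]
        rfl
    have e1 : -((m : ℤ) + 1) + 1 = -(m : ℤ) := by ring
    have e2 : -((m : ℤ) + 1) = -((m + 1 : ℕ) : ℤ) := by push_cast; ring
    rw [e1, e2, t1, t1, hw z hz]
    rw [hφ0 z hz] at key
    linear_combination key
  · obtain ⟨m, rfl⟩ : ∃ m : ℕ, N = (m : ℤ) := ⟨N.toNat, by omega⟩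
    have key := P34.core I hIopen u (deriv u) ψ hψ' (smd _ hus)
      (fun y hy => by rw [hψ_zero]; exact hu2 y hy) hψ2 m z hz _ (fun _ => rfl)
    have t1 : ∀ k : ℕ, hankelTau ψ φ (k : ℤ)
        = fun y => (P34.F (fun n => ψ n y) (fun i : Fin k => (i : ℕ))).det := by
      intro k
      ext y
      unfold hankelTau
      rw [if_pos (by omega)]
      rfl
    have e1 : (m : ℤ) + 1 = ((m + 1 : ℕ) : ℤ) := by push_cast; ring
    rw [e1, t1, t1, hw z hz]
    rw [hψ_zero] at key
    linear_combination key
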